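/- arXiv:0709.3021 — 2 statements merged into one kernel-verified Lean document; each statement's English description precedes it below -/
import Mathlib

section
/- Let n ≥ 1 and k ≥ 0. Then, as an identity in MvPolynomial (Fin n) ℤ: n! · Δ(X)^{2k} = ∑_{(σ_1,…,σ_{2k+2}) ∈ (S_n)^{2k+2}} sign(σ_1)⋯sign(σ_{2k+2}) · ∏_{i=1}^n h_{(n−σ_1(i)) + (n−σ_2(i)) + ⋯ + (n−σ_{2k+1}(i)) + σ_{2k+2}(i) − n}(X). That is, the 2k-th power of the Vandermonde determinant equals the hyperdeterminant of the (2k+2)-th order hypermatrix with entries h_{(n−i_1)+⋯+(n−i_{2k+1})+i_{2k+2}−n}(X), 1 ≤ i_1,…,i_{2k+2} ≤ n (the hyperdeterminantal content of the identity expressing Δ(X)^{2k} as a Jack polynomial P^{(k+1)}_{n^{(n−1)k}} of the alphabet −X). -/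
/-- `hh n p` is the `p`-th complete homogeneous symmetric polynomial in `n`
variables, with the convention `hh n p = 0` for `p < 0` and `hh n 0 = 1`. -/
noncomputable def hh (n : ℕ) (p : ℤ) : MvPolynomial (Fin n) ℤ :=
  if 0 ≤ p then MvPolynomial.hsymm (Fin n) ℤ p.toNat else 0

/-- The Vandermonde polynomial `Δ(X) = ∏_{i<j} (x_i − x_j)`. -/
noncomputable def vandermondePoly (n : ℕ) : MvPolynomial (Fin n) ℤ :=
  ∏ p ∈ Finset.univ.filter (fun p : Fin n × Fin n => p.1 < p.2),
    (MvPolynomial.X p.1 - MvPolynomial.X p.2)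

open Finset in
lemma aux_hsymm_coeff {K : Type*} [Field K] (n d : ℕ) (x : Fin n → K) :
    PowerSeries.coeff d (∏ i, PowerSeries.mk (fun m => x i ^ m))
      = MvPolynomial.aeval x (MvPolynomial.hsymm (Fin n) ℤ d) := by
  classical
  rw [PowerSeries.coeff_prod, MvPolynomial.hsymm, map_sum]
  simp only [PowerSeries.coeff_mk]
  symm
  refine Finset.sum_bij' (fun s _ => Multiset.toFinsupp s.1)
    (fun l hl => ⟨Finsupp.toMultiset l, ?_⟩) ?_ ?_ ?_ ?_ ?_
  · rw [mem_finsuppAntidiag] at hl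
    rw [Finsupp.card_toMultiset, ← hl.1, Finsupp.sum_fintype _ _ (by simp)]
    rfl
  · intro s _
    rw [mem_finsuppAntidiag]
    refine ⟨?_, by simp⟩
    have h := Multiset.toFinsupp_sum_eq s.1
    rw [Finsupp.sum_fintype _ _ (by simp)] at h
    exact h.trans s.2
  · intros; exact mem_univ _
  · intro s _
    apply Subtype.ext
    simp
  · intro l hl
    simp
  · intro s _
    rw [← Multiset.prod_hom' , Finset.prod_multiset_map_count]
    simp only [MvPolynomial.aeval_X, Multiset.toFinsupp_apply]
    apply Finset.prod_subset (subset_univ _)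
    intro i _ hi
    rw [Multiset.mem_toFinset] at hi
    exact (congrArg (fun m => x i ^ m) (Multiset.count_eq_zero_of_notMem hi)).trans (pow_zero _)

open Finset in
lemma aux_geom {K : Type*} [Field K] (a : K) :
    (1 - PowerSeries.C a * PowerSeries.X) * PowerSeries.mk (fun m => a ^ m) = 1 := by
  ext m
  rw [sub_mul, one_mul, mul_assoc, map_sub, PowerSeries.coeff_C_mul]
  cases m with
  | zero => simp
  | succ m => simp [PowerSeries.coeff_succ_X_mul, pow_succ', PowerSeries.coeff_one]

open Finset Polynomial in
lemma aux_partial {K : Type*} [Field K] (n : ℕ) (hn : 1 ≤ n) (x : Fin n → K)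
    (hx : Function.Injective x) (h0 : ∀ i, x i ≠ 0) :
    ∑ j, C (x j ^ (n - 1) / ∏ l ∈ univ.erase j, (x j - x l)) *
      ∏ l ∈ univ.erase j, (1 - C (x l) * X) = (1 : K[X]) := by
  have hv : Function.Injective (fun i => (x i)⁻¹) := fun i j h => hx (inv_injective h)
  have : Nonempty (Fin n) := ⟨⟨0, hn⟩⟩
  refine Eq.trans ?_ (Lagrange.sum_basis (s := univ) (v := fun i => (x i)⁻¹) hv.injOn univ_nonempty)
  refine Finset.sum_congr rfl fun j _ => ?_
  have hc : x j ^ (n - 1) = ∏ l ∈ univ.erase j, x j := by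
    rw [prod_const, card_erase_of_mem (mem_univ _), card_univ, Fintype.card_fin]
  rw [hc, ← prod_div_distrib, map_prod, ← prod_mul_distrib, Lagrange.basis]
  refine Finset.prod_congr rfl fun l hl => ?_
  have hjl : x j - x l ≠ 0 := sub_ne_zero.2 fun h => (ne_of_mem_erase hl) (hx h).symm
  have hlj : x l - x j ≠ 0 := sub_ne_zero.2 fun h => (ne_of_mem_erase hl) (hx h)
  have hj := h0 j
  have hl' := h0 l
  rw [Lagrange.basisDivisor]
  have e1 : ((x j)⁻¹ - (x l)⁻¹)⁻¹ = x j / (x j - x l) * (- x l) := by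
    rw [inv_sub_inv hj hl', inv_div]
    field_simp
    ring
  rw [e1, C_mul, mul_assoc]
  congr 1
  have : C (x l) * C (x l)⁻¹ = 1 := by rw [← C_mul, mul_inv_cancel₀ hl', C_1]
  rw [C_neg]
  linear_combination -this

open Finset in
lemma aux_hsymm {K : Type*} [Field K] (n : ℕ) (hn : 1 ≤ n) (x : Fin n → K)
    (hx : Function.Injective x) (h0 : ∀ i, x i ≠ 0) (d : ℕ) :
    MvPolynomial.aeval x (MvPolynomial.hsymm (Fin n) ℤ d)
      = ∑ j, x j ^ (d + (n - 1)) / ∏ l ∈ univ.erase j, (x j - x l) := by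
  classical
  rw [← aux_hsymm_coeff]
  set H : PowerSeries K := ∏ i, PowerSeries.mk (fun m => x i ^ m)
  set E : PowerSeries K := ∏ i, (1 - PowerSeries.C (x i) * PowerSeries.X)
  set G : PowerSeries K := ∑ j, PowerSeries.C (x j ^ (n - 1) / ∏ l ∈ univ.erase j, (x j - x l)) *
    PowerSeries.mk (fun m => x j ^ m)
  have hEH : E * H = 1 := by
    simp only [E, H, ← prod_mul_distrib, aux_geom, prod_const_one]
  have hEG : E * G = 1 := by
    have h := congrArg (Polynomial.coeToPowerSeries.ringHom (R := K)) (aux_partial n hn x hx h0)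
    rw [map_sum, map_one] at h
    rw [← h, mul_sum]
    refine sum_congr rfl fun j _ => ?_
    rw [map_mul, map_prod]
    simp only [map_sub, map_one, map_mul, Polynomial.coeToPowerSeries.ringHom_apply,
      Polynomial.coe_C, Polynomial.coe_X]
    have hE : E = (1 - PowerSeries.C (x j) * PowerSeries.X) *
      ∏ l ∈ univ.erase j, (1 - PowerSeries.C (x l) * PowerSeries.X) :=
      (mul_prod_erase _ _ (mem_univ j)).symm
    rw [hE]
    linear_combination (PowerSeries.C (x j ^ (n - 1) / ∏ l ∈ univ.erase j, (x j - x l)) *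
      ∏ l ∈ univ.erase j, (1 - PowerSeries.C (x l) * PowerSeries.X)) * aux_geom (x j)
  have hHG : H = G := by
    linear_combination G * hEH - H * hEG
  rw [hHG, map_sum]
  refine sum_congr rfl fun j _ => ?_
  rw [PowerSeries.coeff_C_mul, PowerSeries.coeff_mk, pow_add]
  ring

open Finset in
lemma aux_hh {K : Type*} [Field K] (n : ℕ) (hn : 1 ≤ n) (x : Fin n → K)
    (hx : Function.Injective x) (h0 : ∀ i, x i ≠ 0) (d : ℕ) :
    MvPolynomial.aeval x (hh n ((d : ℤ) - ((n : ℤ) - 1)))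
      = ∑ j, x j ^ d / ∏ l ∈ univ.erase j, (x j - x l) := by
  unfold hh
  split_ifs with h
  · rw [aux_hsymm n hn x hx h0]
    have : ((d : ℤ) - ((n : ℤ) - 1)).toNat + (n - 1) = d := by omega
    rw [this]
  · have hd : d < n - 1 := by omega
    have := Lagrange.coeff_eq_sum (s := (univ : Finset (Fin n))) (v := x) hx.injOn
      (P := Polynomial.X ^ d) (by
        rw [Polynomial.degree_X_pow, card_univ, Fintype.card_fin]; norm_cast; omega)
    rw [card_univ, Fintype.card_fin, Polynomial.coeff_X_pow, if_neg (by omega)] at this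
    simpa using this

open Finset in
lemma aux_hyper {K : Type*} [Field K] (n N : ℕ) (hN : Even N) (hN0 : 0 < N) (x c : Fin n → K)
    (e : Fin N → Fin n → ℕ) :
    ∑ σ : Fin N → Equiv.Perm (Fin n), (∏ s, ((Equiv.Perm.sign (σ s) : ℤ) : K)) *
      ∏ i, ∑ j, c j * x j ^ (∑ s, e s (σ s i))
      = (Nat.factorial n : K) * ((∏ i, c i) *
        ∏ s, (Matrix.of fun j i => x i ^ e s j).det) := by
  classical
  have h1 : ∀ σ : Fin N → Equiv.Perm (Fin n), (∏ s, ((Equiv.Perm.sign (σ s) : ℤ) : K)) *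
      ∏ i, ∑ j, c j * x j ^ (∑ s, e s (σ s i)) =
      ∑ f : Fin n → Fin n, (∏ i, c (f i)) *
        ∏ s, (((Equiv.Perm.sign (σ s) : ℤ) : K) * ∏ i, x (f i) ^ e s (σ s i)) := by
    intro σ
    rw [Fintype.prod_sum, mul_sum]
    refine sum_congr rfl fun f _ => ?_
    rw [prod_mul_distrib, prod_mul_distrib, prod_comm]
    simp only [prod_pow_eq_pow_sum]
    ring
  simp only [h1]
  rw [sum_comm]
  have h2 : ∀ f : Fin n → Fin n, ∑ σ : Fin N → Equiv.Perm (Fin n), (∏ i, c (f i)) *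
        ∏ s, (((Equiv.Perm.sign (σ s) : ℤ) : K) * ∏ i, x (f i) ^ e s (σ s i)) =
      (∏ i, c (f i)) *
        ∏ s, ((Matrix.of fun j i => x i ^ e s j).submatrix id f).det := by
    intro f
    rw [← mul_sum, ← Fintype.prod_sum (fun s (τ : Equiv.Perm (Fin n)) =>
      (((Equiv.Perm.sign τ : ℤ) : K) * ∏ i, x (f i) ^ e s (τ i)))]
    simp only [Matrix.det_apply']
    rfl
  simp only [h2]
  have h3 : ∀ f : Fin n → Fin n, f ∉ Set.range (fun τ : Equiv.Perm (Fin n) => (τ : Fin n → Fin n)) →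
      (∏ i, c (f i)) *
        ∏ s, ((Matrix.of fun j i => x i ^ e s j).submatrix id f).det = 0 := by
    intro f hf
    have hni : ¬ Function.Injective f := fun hi =>
      hf ⟨Equiv.ofBijective f (Finite.injective_iff_bijective.1 hi), rfl⟩
    simp only [Function.Injective, not_forall] at hni
    obtain ⟨a, b, hab, hne⟩ := hni
    rw [prod_eq_zero (i := (⟨0, hN0⟩ : Fin N)) (mem_univ _) ?_, mul_zero]
    apply Matrix.det_zero_of_column_eq hne
    intro i
    simp [hab]
  rw [← Fintype.sum_of_injective (fun τ : Equiv.Perm (Fin n) => (τ : Fin n → Fin n))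
    DFunLike.coe_injective (fun _ => (∏ i, c i) *
        ∏ s, (Matrix.of fun j i => x i ^ e s j).det) _ h3]
  · simp [Fintype.card_perm]
  · intro τ
    simp only [Matrix.det_permute', prod_mul_distrib]
    rw [Equiv.prod_comp τ c, prod_const, card_univ, Fintype.card_fin]
    obtain ⟨m, rfl⟩ := hN
    rcases Int.units_eq_one_or (Equiv.Perm.sign τ) with h | h <;> simp [h]

open Finset in
lemma aux_filter {K : Type*} [CommRing K] (n : ℕ) (g : Fin n → Fin n → K) :
    ∏ i, ∏ j ∈ Ioi i, g i j
      = ∏ p ∈ univ.filter (fun p : Fin n × Fin n => p.1 < p.2), g p.1 p.2 := by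
  rw [prod_filter, ← univ_product_univ, prod_product]
  refine prod_congr rfl fun i _ => ?_
  rw [← prod_filter]
  congr 1
  ext j; simp

open Finset in
lemma aux_disc {K : Type*} [CommRing K] (n : ℕ) (x : Fin n → K) :
    ∏ i, ∏ j ∈ univ.erase i, (x i - x j)
      = (∏ i, ∏ j ∈ Ioi i, (x i - x j)) * ∏ i, ∏ j ∈ Ioi i, (x j - x i) := by
  have h : ∀ i : Fin n, univ.erase i = Ioi i ∪ Iio i := by
    intro i; ext j; simp [lt_or_lt_iff_ne, eq_comm]
  have hd : ∀ i : Fin n, Disjoint (Ioi i) (Iio i) := by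
    intro i
    rw [Finset.disjoint_left]
    intro j hj hj'
    simp only [mem_Ioi, mem_Iio] at hj hj'
    exact lt_asymm hj hj'
  simp only [h, prod_union (hd _), prod_mul_distrib]
  congr 1
  apply prod_comm'
  intro a b; simp

open Finset in
lemma aux_main {K : Type*} [Field K] (n k : ℕ) (hn : 1 ≤ n)
    (φ : MvPolynomial (Fin n) ℤ →ₐ[ℤ] K) (hφ : Function.Injective φ) :
    (Nat.factorial n : ℤ) • vandermondePoly n ^ (2 * k)
      = ∑ σ : Fin (2 * k + 2) → Equiv.Perm (Fin n),
          (∏ s, (Equiv.Perm.sign (σ s) : ℤ)) •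
            ∏ i, hh n
              ((∑ s ∈ Finset.univ.filter (fun s : Fin (2 * k + 2) => (s : ℕ) < 2 * k + 1),
                  ((n : ℤ) - (((σ s i : ℕ) : ℤ) + 1)))
                + (((σ (Fin.last (2 * k + 1)) i : ℕ) : ℤ) + 1) - (n : ℤ)) := by
  classical
  let x : Fin n → K := fun i => φ (MvPolynomial.X i)
  have hx : Function.Injective x := hφ.comp (MvPolynomial.X_injective)
  have h0 : ∀ i, x i ≠ 0 := fun i => by
    rw [Ne, map_eq_zero_iff φ hφ]; exact MvPolynomial.X_ne_zero i
  have hφx : φ = MvPolynomial.aeval x := by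
    ext i; simp [x]
  let e : Fin (2 * k + 2) → Fin n → ℕ := fun s j =>
    if (s : ℕ) < 2 * k + 1 then n - 1 - (j : ℕ) else j
  let c : Fin n → K := fun j => (∏ l ∈ univ.erase j, (x j - x l))⁻¹
  have hent : ∀ (σ : Fin (2 * k + 2) → Equiv.Perm (Fin n)) (i : Fin n),
      φ (hh n
              ((∑ s ∈ Finset.univ.filter (fun s : Fin (2 * k + 2) => (s : ℕ) < 2 * k + 1),
                  ((n : ℤ) - (((σ s i : ℕ) : ℤ) + 1)))
                + (((σ (Fin.last (2 * k + 1)) i : ℕ) : ℤ) + 1) - (n : ℤ)))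
        = ∑ j, c j * x j ^ (∑ s, e s (σ s i)) := by
    intro σ i
    have hexp : ((∑ s ∈ Finset.univ.filter (fun s : Fin (2 * k + 2) => (s : ℕ) < 2 * k + 1),
                  ((n : ℤ) - (((σ s i : ℕ) : ℤ) + 1)))
                + (((σ (Fin.last (2 * k + 1)) i : ℕ) : ℤ) + 1) - (n : ℤ))
        = ((∑ s, e s (σ s i) : ℕ) : ℤ) - ((n : ℤ) - 1) := by
      have hs : (∑ s, e s (σ s i) : ℕ) =
          (∑ s ∈ Finset.univ.filter (fun s : Fin (2 * k + 2) => (s : ℕ) < 2 * k + 1),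
            (n - 1 - (σ s i : ℕ))) + (σ (Fin.last (2 * k + 1)) i : ℕ) := by
        rw [← sum_filter_add_sum_filter_not univ
          (fun s : Fin (2 * k + 2) => (s : ℕ) < 2 * k + 1)]
        congr 1
        · refine sum_congr rfl fun s hs => ?_
          simp only [e]
          rw [if_pos (mem_filter.1 hs).2]
        · have : univ.filter (fun s : Fin (2 * k + 2) => ¬ (s : ℕ) < 2 * k + 1)
              = {(Fin.last (2 * k + 1))} := by
            ext s
            simp only [mem_filter, mem_univ, true_and, mem_singleton, Fin.ext_iff, Fin.val_last]
            omega
          rw [this, sum_singleton]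
          simp [e]
      rw [hs]
      push_cast
      have : ∀ s, ((n - 1 - (σ s i : ℕ) : ℕ) : ℤ) = (n : ℤ) - (((σ s i : ℕ) : ℤ) + 1) := by
        intro s
        have := (σ s i).2
        omega
      simp only [this]
      ring
    rw [hexp, hφx, aux_hh n hn x hx h0]
    refine sum_congr rfl fun j _ => ?_
    simp only [c]
    rw [div_eq_inv_mul]
  apply hφ
  rw [map_zsmul, map_sum, map_pow]
  have hterm : ∀ σ : Fin (2 * k + 2) → Equiv.Perm (Fin n), φ ((∏ s, (Equiv.Perm.sign (σ s) : ℤ)) •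
            ∏ i, hh n
              ((∑ s ∈ Finset.univ.filter (fun s : Fin (2 * k + 2) => (s : ℕ) < 2 * k + 1),
                  ((n : ℤ) - (((σ s i : ℕ) : ℤ) + 1)))
                + (((σ (Fin.last (2 * k + 1)) i : ℕ) : ℤ) + 1) - (n : ℤ)))
      = (∏ s, ((Equiv.Perm.sign (σ s) : ℤ) : K)) *
          ∏ i, ∑ j, c j * x j ^ (∑ s, e s (σ s i)) := by
    intro σ
    rw [map_zsmul, map_prod, zsmul_eq_mul, Int.cast_prod]
    congr 1
    exact prod_congr rfl fun i _ => hent σ i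
  refine Eq.trans ?_ (sum_congr rfl fun σ _ => hterm σ).symm
  rw [zsmul_eq_mul, Int.cast_natCast]
  rw [aux_hyper n (2 * k + 2) ⟨k + 1, by ring⟩ (by omega) x c e]
  congr 1
  have hΔ : φ (vandermondePoly n) = ∏ i, ∏ j ∈ Ioi i, (x i - x j) := by
    rw [aux_filter n (fun i j => x i - x j), vandermondePoly, map_prod]
    simp [x]
  have hM1 : (Matrix.of fun (j i : Fin n) => x i ^ (n - 1 - (j : ℕ))).det
      = ∏ i, ∏ j ∈ Ioi i, (x i - x j) := by
    rw [← Matrix.det_transpose]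
    have := Matrix.det_projVandermonde (fun _ : Fin n => (1 : K)) x
    simp only [one_mul] at this
    rw [← this]
    congr 1
    ext i j
    simp [Matrix.projVandermonde_apply, Fin.val_rev, Nat.sub_sub, add_comm]
  have hM2 : (Matrix.of fun (j i : Fin n) => x i ^ (j : ℕ)).det
      = ∏ i, ∏ j ∈ Ioi i, (x j - x i) := by
    rw [← Matrix.det_transpose, ← Matrix.det_vandermonde]
    rfl
  have hc : ∏ i, c i = (∏ i, ∏ j ∈ Ioi i, (x i - x j))⁻¹ * (∏ i, ∏ j ∈ Ioi i, (x j - x i))⁻¹ := by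
    simp only [c]
    rw [prod_inv_distrib, aux_disc, mul_inv]
  have hne1 : ∏ i, ∏ j ∈ Ioi i, (x i - x j) ≠ 0 := by
    refine prod_ne_zero_iff.2 fun i _ => prod_ne_zero_iff.2 fun j hj => sub_ne_zero.2 fun h => ?_
    exact (mem_Ioi.1 hj).ne (hx h)
  have hne2 : ∏ i, ∏ j ∈ Ioi i, (x j - x i) ≠ 0 := by
    refine prod_ne_zero_iff.2 fun i _ => prod_ne_zero_iff.2 fun j hj => sub_ne_zero.2 fun h => ?_
    exact (mem_Ioi.1 hj).ne' (hx h)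
  have hlast : ∏ s, (Matrix.of fun (j i : Fin n) => x i ^ e s j).det
      = (∏ i, ∏ j ∈ Ioi i, (x i - x j)) ^ (2 * k + 1) * ∏ i, ∏ j ∈ Ioi i, (x j - x i) := by
    rw [Fin.prod_univ_castSucc]
    have hcs : ∀ s : Fin (2 * k + 1), e s.castSucc = fun j : Fin n => n - 1 - (j : ℕ) := by
      intro s; funext j; exact if_pos s.2
    have hl : e (Fin.last (2 * k + 1)) = fun j : Fin n => (j : ℕ) := by
      funext j; simp [e]
    simp only [hcs, hl, hM1, hM2]
    simp
  rw [hΔ, hc, hlast, pow_succ]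
  field_simp

/-- The `2k`-th power of the Vandermonde determinant is the
`(1/n!)`-scaled hyperdeterminant of the `(2k+2)`-th order hypermatrix with
entries `h_{(n−i_1)+⋯+(n−i_{2k+1})+i_{2k+2}−n}(X)` (the hyperdeterminantal
content of `Δ(X)^{2k}` being the Jack polynomial `P^{(k+1)}_{n^{(n−1)k}}(−X)`). -/
theorem vandermonde_pow_eq_hyperdet (n k : ℕ) (hn : 1 ≤ n) :
    (Nat.factorial n : ℤ) • vandermondePoly n ^ (2 * k)
      = ∑ σ : Fin (2 * k + 2) → Equiv.Perm (Fin n),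
          (∏ s, (Equiv.Perm.sign (σ s) : ℤ)) •
            ∏ i, hh n
              ((∑ s ∈ Finset.univ.filter (fun s : Fin (2 * k + 2) => (s : ℕ) < 2 * k + 1),
                  ((n : ℤ) - (((σ s i : ℕ) : ℤ) + 1)))
                + (((σ ⟨2 * k + 1, by omega⟩ i : ℕ) : ℤ) + 1) - (n : ℤ)) := by
  exact aux_main n k hn
    (algebraMap (MvPolynomial (Fin n) ℤ) (FractionRing (MvPolynomial (Fin n) ℤ))).toIntAlgHom
    (IsFractionRing.injective (MvPolynomial (Fin n) ℤ) (FractionRing (MvPolynomial (Fin n) ℤ)))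
end

section
/- Let n ≥ 1, k ≥ 0, and let λ = (λ_1 ≥ … ≥ λ_n ≥ 0) be a partition with at most n parts. Let c_λ ∈ ℤ be the coefficient of the monomial x_1^{λ_1+n−1} x_2^{λ_2+n−2} ⋯ x_n^{λ_n} in Δ(X)^{2k+1} (this c_λ is the coefficient of the Schur polynomial S_λ(X) in the Schur expansion of Δ(X)^{2k}). Then n! · c_λ = (−1)^{n(n−1)/2} · ∑_{(σ_1,…,σ_{2k+2}) ∈ (S_n)^{2k+2}} sign(σ_1)⋯sign(σ_{2k+2}) · ∏_{i=1}^n χ[ (σ_1(i)−1) + (σ_2(i)−1) + ⋯ + (σ_{2k+2}(i)−1) + λ_{n−σ_1(i)+1} = (2k+1)(n−1) ], where χ[P] = 1 if P holds and 0 otherwise. That is, ⟨S_λ(X), Δ(X)^{2k}⟩ = (−1)^{n(n−1)/2} H^{k+1}_{reverse_n(λ)−((2k+1)(n−1))^n}(A_0), where A_0 is the alphabet with Λ^m(A_0) = δ_{m,0}. -/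
open Finset in
lemma aux_vdm (n : ℕ) :
    vandermondePoly n = (-1) ^ (n * (n - 1) / 2) *
      ∑ σ : Equiv.Perm (Fin n), MvPolynomial.C (Equiv.Perm.sign σ : ℤ) *
        ∏ i, (MvPolynomial.X i : MvPolynomial (Fin n) ℤ) ^ (σ i : ℕ) := by
  have h1 : (Matrix.vandermonde (fun i : Fin n => (MvPolynomial.X i : MvPolynomial (Fin n) ℤ))).det
      = ∑ σ : Equiv.Perm (Fin n), MvPolynomial.C (Equiv.Perm.sign σ : ℤ) *
        ∏ i, (MvPolynomial.X i : MvPolynomial (Fin n) ℤ) ^ (σ i : ℕ) := by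
    rw [← Matrix.det_transpose, Matrix.det_apply']
    simp [Matrix.vandermonde_apply]
  have h2 : vandermondePoly n = ∏ i : Fin n, ∏ j ∈ Ioi i,
      ((MvPolynomial.X i : MvPolynomial (Fin n) ℤ) - MvPolynomial.X j) := by
    unfold vandermondePoly
    rw [Finset.prod_sigma']
    refine Finset.prod_bij' (fun p _ => ⟨p.1, p.2⟩) (fun p _ => (p.1, p.2)) ?_ ?_ ?_ ?_ ?_ <;> simp
  have h3 : ∑ i : Fin n, (n - 1 - (i : ℕ)) = n * (n - 1) / 2 := by
    rw [Fin.sum_univ_eq_sum_range (fun i => n - 1 - i) n, Finset.sum_range_reflect (fun i => i) n,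
      Finset.sum_range_id]
  rw [← h1, Matrix.det_vandermonde, h2, ← h3, ← Finset.prod_pow_eq_pow_sum,
    ← Finset.prod_mul_distrib]
  refine Finset.prod_congr rfl fun i _ => ?_
  have hc : n - 1 - (i : ℕ) = (Ioi i).card := by simp [Fin.card_Ioi]
  rw [hc, ← Finset.prod_const, ← Finset.prod_mul_distrib]
  exact Finset.prod_congr rfl fun j _ => by ring

lemma aux_coeff (n m : ℕ) (d : Fin n → ℕ) :
    MvPolynomial.coeff (Finsupp.equivFunOnFinite.symm d) (vandermondePoly n ^ m)
      = ((-1 : ℤ) ^ (n * (n - 1) / 2)) ^ m *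
        ∑ σ : Fin m → Equiv.Perm (Fin n), (∏ s, (Equiv.Perm.sign (σ s) : ℤ)) *
          ∏ i, (if ∑ s, (σ s i : ℕ) = d i then (1 : ℤ) else 0) := by
  have hC : ((-1 : MvPolynomial (Fin n) ℤ) ^ (n * (n - 1) / 2)) ^ m
      = MvPolynomial.C (((-1 : ℤ) ^ (n * (n - 1) / 2)) ^ m) := by simp
  rw [aux_vdm, mul_pow, hC, MvPolynomial.coeff_C_mul, Fintype.sum_pow, MvPolynomial.coeff_sum]
  congr 1
  refine Finset.sum_congr rfl fun σ _ => ?_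
  rw [Finset.prod_mul_distrib, ← map_prod, MvPolynomial.coeff_C_mul]
  congr 1
  rw [Finset.prod_comm]
  simp_rw [Finset.prod_pow_eq_pow_sum]
  have hm : ∏ i, (MvPolynomial.X i : MvPolynomial (Fin n) ℤ) ^ (∑ s, (σ s i : ℕ))
      = MvPolynomial.monomial (Finsupp.equivFunOnFinite.symm fun i => ∑ s, (σ s i : ℕ)) 1 := by
    rw [MvPolynomial.monomial_eq, Finsupp.prod_fintype _ _ (by simp)]
    simp
  rw [hm, MvPolynomial.coeff_monomial, Finset.prod_ite_zero]
  simp [funext_iff]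

lemma aux_inner (n k : ℕ) (lam : Fin n → ℕ) (τ : Equiv.Perm (Fin n)) :
    ∑ σ : Fin (2 * k + 1) → Equiv.Perm (Fin n),
      ((Equiv.Perm.sign τ : ℤ) * ∏ s, (Equiv.Perm.sign (σ s) : ℤ)) *
        ∏ i, (if ((τ i : ℕ) + ∑ s, (σ s i : ℕ)) + lam ⟨n - 1 - (τ i : ℕ), by omega⟩
          = (2 * k + 1) * (n - 1) then (1 : ℤ) else 0)
    = ∑ σ : Fin (2 * k + 1) → Equiv.Perm (Fin n), (∏ s, (Equiv.Perm.sign (σ s) : ℤ)) *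
          ∏ i, (if ∑ s, (σ s i : ℕ) = lam i + (n - 1 - (i : ℕ)) then (1 : ℤ) else 0) := by
  let e : Equiv.Perm (Fin n) ≃ Equiv.Perm (Fin n) :=
    (Equiv.mulLeft Fin.revPerm).trans (Equiv.mulRight (τ⁻¹ * Fin.revPerm))
  have he : ∀ π, e π = Fin.revPerm * π * (τ⁻¹ * Fin.revPerm) := fun π => rfl
  refine Fintype.sum_equiv (Equiv.piCongrRight fun _ => e) _ _ fun σ => ?_
  simp only [Equiv.piCongrRight_apply, Pi.map_apply]
  congr 1
  · have hs : ∀ s, (Equiv.Perm.sign (e (σ s)) : ℤ)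
        = (Equiv.Perm.sign τ : ℤ) * (Equiv.Perm.sign (σ s) : ℤ) := by
      intro s
      rw [he]
      simp only [Equiv.Perm.sign_mul, Equiv.Perm.sign_inv, Units.val_mul]
      have : ((Equiv.Perm.sign (Fin.revPerm : Equiv.Perm (Fin n)) : ℤ)) *
        (Equiv.Perm.sign (Fin.revPerm : Equiv.Perm (Fin n)) : ℤ) = 1 := by
        rw [← Units.val_mul, Int.units_mul_self, Units.val_one]
      linear_combination (Equiv.Perm.sign τ : ℤ) * (Equiv.Perm.sign (σ s) : ℤ) * this
    simp_rw [hs]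
    rw [Finset.prod_mul_distrib, Finset.prod_const, Finset.card_univ, Fintype.card_fin, pow_succ,
      pow_mul, ← Units.val_pow_eq_pow_val _ 2, Int.units_sq]
    simp
  · refine Fintype.prod_equiv (τ.trans Fin.revPerm) _ _ fun i => ?_
    have hx : ∀ s, ((e (σ s)) ((τ.trans Fin.revPerm) i) : ℕ) = n - 1 - (σ s i : ℕ) := by
      intro s
      rw [he]
      simp [Fin.val_rev]
      omega
    have hj : (⟨n - 1 - (τ i : ℕ), by omega⟩ : Fin n) = (τ.trans Fin.revPerm) i := by
      ext
      simp [Fin.val_rev]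
      omega
    have hjv : (((τ.trans Fin.revPerm) i : Fin n) : ℕ) = n - 1 - (τ i : ℕ) := by rw [← hj]
    have hsum : ∑ s, ((e (σ s)) ((τ.trans Fin.revPerm) i) : ℕ) + ∑ s, (σ s i : ℕ)
        = (2 * k + 1) * (n - 1) := by
      rw [← Finset.sum_add_distrib]
      rw [Finset.sum_congr rfl (g := fun _ => n - 1)]
      · simp
      · intro s _
        rw [hx]
        omega
    rw [hj, hjv]
    congr 1
    apply propext
    have := (τ i).isLt
    omega

/-- The coefficient `c_λ` of the Schur polynomial `S_λ(X)` in the Schur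
expansion of `Δ(X)^{2k}`, i.e. the coefficient of the dominant monomial
`x^{λ+δ}` in `Δ(X)^{2k+1}`, equals (up to the factor `n!` and a sign) the
Hankel hyperdeterminant `H^{k+1}_{reverseₙ(λ)−((2k+1)(n−1))^n}(A₀)` of the
alphabet `A₀` with `Λ^m(A₀) = δ_{m,0}`. -/
theorem schur_coeff_vandermonde_pow_eq_hyperdet
    (n k : ℕ) (hn : 1 ≤ n)
    (lam : Fin n → ℕ) (hlam : Antitone lam) :
    (Nat.factorial n : ℤ) *
        MvPolynomial.coeff
          (Finsupp.equivFunOnFinite.symm fun i : Fin n => lam i + (n - 1 - (i : ℕ)))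
          (vandermondePoly n ^ (2 * k + 1))
      = (-1 : ℤ) ^ (n * (n - 1) / 2) *
          ∑ σ : Fin (2 * k + 2) → Equiv.Perm (Fin n),
            (∏ s, (Equiv.Perm.sign (σ s) : ℤ)) *
              ∏ i, (if (∑ s, (σ s i : ℕ))
                        + lam ⟨n - 1 - (σ ⟨0, by omega⟩ i : ℕ), by omega⟩
                      = (2 * k + 1) * (n - 1)
                    then (1 : ℤ) else 0) := by
  have hS : ∑ σ : Fin (2 * k + 2) → Equiv.Perm (Fin n),
            (∏ s, (Equiv.Perm.sign (σ s) : ℤ)) *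
              ∏ i, (if (∑ s, (σ s i : ℕ))
                        + lam ⟨n - 1 - (σ ⟨0, by omega⟩ i : ℕ), by omega⟩
                      = (2 * k + 1) * (n - 1)
                    then (1 : ℤ) else 0)
      = ∑ τ : Equiv.Perm (Fin n), ∑ σ : Fin (2 * k + 1) → Equiv.Perm (Fin n),
      ((Equiv.Perm.sign τ : ℤ) * ∏ s, (Equiv.Perm.sign (σ s) : ℤ)) *
        ∏ i, (if ((τ i : ℕ) + ∑ s, (σ s i : ℕ)) + lam ⟨n - 1 - (τ i : ℕ), by omega⟩
          = (2 * k + 1) * (n - 1) then (1 : ℤ) else 0) := by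
    rw [← Fintype.sum_prod_type']
    refine (Fintype.sum_equiv (Fin.consEquiv (fun _ : Fin (2 * k + 2) => Equiv.Perm (Fin n)))
      _ _ fun p => ?_).symm
    have h1 := Fin.prod_univ_succ (fun s => (Equiv.Perm.sign
      (Fin.consEquiv (fun _ : Fin (2 * k + 2) => Equiv.Perm (Fin n)) p s) : ℤ))
    have h2 := fun i => Fin.sum_univ_succ (fun s =>
      (Fin.consEquiv (fun _ : Fin (2 * k + 2) => Equiv.Perm (Fin n)) p s i : ℕ))
    rw [h1]
    simp_rw [h2]
    rfl
  rw [hS, aux_coeff]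
  simp_rw [aux_inner]
  rw [Finset.sum_const, Finset.card_univ, Fintype.card_perm, Fintype.card_fin, nsmul_eq_mul]
  have hsg : ((-1 : ℤ) ^ (n * (n - 1) / 2)) ^ (2 * k + 1) = (-1 : ℤ) ^ (n * (n - 1) / 2) := by
    rw [← pow_mul, mul_comm, pow_mul, Odd.neg_one_pow ⟨k, rfl⟩]
  rw [hsg]
  ring
end
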